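/- arXiv:0707.2160 — 5 statements merged into one kernel-verified Lean document; each statement's English description precedes it below -/
import Mathlib

section
/- Let Σ be a finite sequence over a linearly ordered alphabet, and suppose Σ contains no subsequence of the form b,a,b,b,a with a < b. Then Σ contains no subsequence isomorphic to the pattern a,b,a,a,b,b,a and no subsequence isomorphic to the pattern a,b,a,b,a,b,a. -/
/-- A sequence `S` contains a subsequence isomorphic to a pattern `σ` (over alphabet `ℕ`)
if some injective renaming of the symbols of `σ` yields a subsequence (sublist) of `S`. -/
def ContainsPattern {α : Type*} (σ : List ℕ) (S : List α) : Prop :=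
  ∃ f : ℕ → α, Set.InjOn f {x | x ∈ σ} ∧ (σ.map f).Sublist S

/-!
Both forbidden patterns contain `b,a,b,b,a` as well as `a,b,a,a,b`, the same word with the two
symbols exchanged. Whichever of the two symbols is the larger after renaming, one of these two
subsequences is an occurrence of `b,a,b,b,a` with `a < b`.
-/

theorem ContainsPattern.exists_ne_forall_map_sublist {α : Type*} {σ : List ℕ} {S : List α}
    (hσ : ContainsPattern σ S) {i j : ℕ} (hij : i ≠ j) (hi : i ∈ σ) (hj : j ∈ σ) :
    ∃ a b : α, a ≠ b ∧
      ∀ w : List (Fin 2), (w.map ![i, j]).Sublist σ → (w.map ![a, b]).Sublist S := by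
  obtain ⟨f, hf, hfS⟩ := hσ
  refine ⟨f i, f j, hf.ne hi hj hij, fun w hw => ?_⟩
  have hcomp : f ∘ ![i, j] = ![f i, f j] := by
    ext x
    fin_cases x <;> rfl
  simpa only [List.map_map, hcomp] using (hw.map f).trans hfS

theorem no_babba_implies_forbidden_general {α : Type*} {S : List α}
    (h : ∀ a b : α, a ≠ b → ¬ List.Sublist [b, a, b, b, a] S ∨ ¬ List.Sublist [a, b, a, a, b] S)
    {σ : List ℕ} {i j : ℕ} (hij : i ≠ j) (hbabba : List.Sublist [j, i, j, j, i] σ)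
    (habaab : List.Sublist [i, j, i, i, j] σ) : ¬ ContainsPattern σ S := by
  intro hσ
  have hi : i ∈ σ := habaab.subset (by simp)
  have hj : j ∈ σ := habaab.subset (by simp)
  obtain ⟨a, b, hab, hwords⟩ := hσ.exists_ne_forall_map_sublist hij hi hj
  rcases h a b hab with hno | hno
  · exact hno (hwords [1, 0, 1, 1, 0] hbabba)
  · exact hno (hwords [0, 1, 0, 0, 1] habaab)

/-- If a sequence over a linearly ordered alphabet has no subsequence of the
form `b,a,b,b,a` with `a < b`, then it has no subsequence isomorphic to `a,b,a,a,b,b,a`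
and none isomorphic to `a,b,a,b,a,b,a`. -/
theorem no_babba_implies_forbidden {α : Type*} [LinearOrder α] (S : List α)
    (h : ∀ a b : α, a < b → ¬ List.Sublist [b, a, b, b, a] S) :
    ¬ ContainsPattern [0, 1, 0, 0, 1, 1, 0] S ∧
    ¬ ContainsPattern [0, 1, 0, 1, 0, 1, 0] S := by
  have hne (a b : α) (hab : a ≠ b) := hab.lt_or_gt.imp (h a b) (h b a)
  exact ⟨no_babba_implies_forbidden_general hne zero_ne_one (by decide) (by decide),
    no_babba_implies_forbidden_general hne zero_ne_one (by decide) (by decide)⟩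
end

section
/- Let L be a binary tree whose root r has no right child, and let L'' be its LCRS ordered tree. Suppose v is the left child of its parent y, both v and y lie on the left spine of L (the path from r obtained by repeatedly taking left children), and y ≠ r. Then the binary tree obtained from L by rotating the edge (v,y) again has a root with no right child, and its LCRS ordered tree is obtained from L'' by making v the new leftmost child of its grandparent in L''. -/
/-- Labelled binary trees. -/
inductive BTree (α : Type u) where
  | nil : BTree α
  | node (l : BTree α) (v : α) (r : BTree α) : BTree α

/-- Rooted ordered trees (rose trees). -/
inductive Rose (α : Type u) where
  | node (v : α) (children : List (Rose α)) : Rose α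

/-- Left-child/right-sibling correspondence: a binary tree is turned into an ordered
forest; the left child of a vertex becomes its leftmost child and the right child of a
vertex becomes its next sibling to the right. -/
def lcrsList {α : Type u} : BTree α → List (Rose α)
  | .nil => []
  | .node l v r => Rose.node v (lcrsList l) :: lcrsList r

/-- Length of the left spine (the path from the root obtained by taking left children). -/
def spineLen {α : Type u} : BTree α → ℕ
  | .nil => 0
  | .node l _ _ => spineLen l + 1

/-- Rotate the edge between the left-spine vertex at depth `d` and its parent (the
left-spine vertex at depth `d-1`): the standard rotation promoting the child. -/
def spineRotate {α : Type u} : ℕ → BTree α → BTree α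
  | 1, .node (.node a x b) y c => .node a x (.node b y c)
  | d+1, .node l v r => .node (spineRotate d l) v r
  | _, t => t

/-- In an ordered tree, take the vertex `g` at depth `k` on the leftmost-child path,
and make the leftmost child of the leftmost child of `g` (i.e. a grandchild `v` of `g`)
the new leftmost child of `g`. -/
def roseMove {α : Type u} : ℕ → Rose α → Rose α
  | 0, .node g (.node y (vc :: ys) :: gs) => .node g (vc :: .node y ys :: gs)
  | k+1, .node g (c :: cs) => .node g (roseMove k c :: cs)
  | _, t => t

/-! Below a vertex `g`, let the leftmost child `y` have leftmost child `x`, and write `A`, `B`,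
`C` for the forests of the children of `x`, the later siblings of `x` and the later siblings of
`y`. Rotating the edge `(x, y)` of the binary tree turns the forest `y[x[A], B], C` below `g` into
`x[A], y[B], C`, which is exactly the promotion of `x`. A rotation deeper on the left spine
changes only the forest below the leftmost child of `g`, so induction along the spine reduces to
this case. -/

section

variable {α : Type*}

theorem node_lcrsList_spineRotate_one (g : α) :
    ∀ t : BTree α,
      Rose.node g (lcrsList (spineRotate 1 t)) = roseMove 0 (Rose.node g (lcrsList t))
  | .node (.node _ _ _) _ _ => rfl
  -- With no edge to rotate, `spineRotate` and `roseMove` both return their argument.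
  | .node .nil _ _ => rfl
  | .nil => rfl

theorem node_lcrsList_spineRotate_succ (g : α) (k : ℕ) (t : BTree α) :
    Rose.node g (lcrsList (spineRotate (k + 1) t)) =
      roseMove k (Rose.node g (lcrsList t)) := by
  induction k generalizing g t with
  | zero => exact node_lcrsList_spineRotate_one g t
  | succ k ih =>
    cases t with
    | nil => rfl
    | node l v r =>
      calc Rose.node g (lcrsList (spineRotate (k + 2) (.node l v r)))
          = Rose.node g (Rose.node v (lcrsList (spineRotate (k + 1) l)) :: lcrsList r) := rfl
        _ = Rose.node g (roseMove k (Rose.node v (lcrsList l)) :: lcrsList r) := by rw [ih v l]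
        _ = roseMove (k + 1) (Rose.node g (lcrsList (.node l v r))) := rfl

end

/-- Let `L` be a binary tree whose root `rv` has no right child and let `v` be
the left-spine vertex at depth `d ≥ 2` (so `v` is the left child of its parent `y`, both on
the left spine, and `y` is not the root).  Rotating the edge `(v,y)` yields a binary tree
whose root again has no right child, and whose LCRS ordered tree is obtained from the LCRS
ordered tree of `L` by making `v` the new leftmost child of its grandparent there. -/
theorem rotation_lcrs {α : Type*} (l : BTree α) (rv : α) (d : ℕ)
    (h2 : 2 ≤ d) (hd : d < spineLen (BTree.node l rv BTree.nil)) :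
    ∃ l' : BTree α,
      spineRotate d (BTree.node l rv BTree.nil) = BTree.node l' rv BTree.nil ∧
      Rose.node rv (lcrsList l') = roseMove (d - 2) (Rose.node rv (lcrsList l)) := by
  obtain ⟨k, rfl⟩ : ∃ k, d = k + 2 := Nat.exists_eq_add_of_le' h2
  exact ⟨spineRotate (k + 1) l, rfl, node_lcrsList_spineRotate_succ rv k l⟩
end

section
/- Let F be a rooted ordered forest and let (u₁,…,u_k), k ≥ 3, be a contiguous subpath of the spine of one of its trees (u_{i+1} is the parent of u_i). Then: (a) the halving compression that, for each odd i ≤ k−2, reassigns the parent of u_i to u_{i+2} and makes u_i the new leftmost child of u_{i+2}, leaves the postorder sequence of the vertices of F unchanged; and (b) the total compression that reassigns the parent of u_i to u_k for all i ≤ k−2 and prepends u₁,…,u_{k−2} (in this order) to the existing child list of u_k, also leaves the postorder sequence unchanged. -/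
structure OForest where
  verts : Finset ℕ
  roots : List ℕ
  par : ℕ → Option ℕ
  childList : ℕ → List ℕ

namespace OForest

/-- Well-formedness of a rooted ordered forest: parents of vertices are vertices, the root
list consists exactly of the parentless vertices, the child lists record exactly the
children of each vertex, and iterating the parent function terminates (witnessed by a rank
function). -/
def Valid (F : OForest) : Prop :=
  (∀ v ∈ F.verts, ∀ u, F.par v = some u → u ∈ F.verts) ∧
  F.roots.Nodup ∧
  (∀ v, v ∈ F.roots ↔ v ∈ F.verts ∧ F.par v = none) ∧
  (∀ v, v ∉ F.verts → F.par v = none) ∧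
  (∀ u, (F.childList u).Nodup) ∧
  (∀ u v, v ∈ F.childList u ↔ v ∈ F.verts ∧ F.par v = some u) ∧
  (∃ dep : ℕ → ℕ, ∀ v ∈ F.verts, ∀ u, F.par v = some u → dep u < dep v)

def postAux (F : OForest) : ℕ → ℕ → List ℕ
  | 0, v => [v]
  | fuel + 1, v => ((F.childList v).map fun c => postAux F fuel c).flatten ++ [v]

/-- Postorder of the forest: for each root from left to right, the postorders of the
subtrees of its children from left to right, followed by the root. -/
def postorder (F : OForest) : List ℕ :=
  (F.roots.map fun r => postAux F F.verts.card r).flatten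

def spineAux (F : OForest) : ℕ → ℕ → List ℕ
  | 0, v => [v]
  | fuel + 1, v =>
    match F.childList v with
    | [] => [v]
    | c :: _ => v :: spineAux F fuel c

/-- The spine of the tree rooted at `r`: the path from `r` to its leftmost leaf, top-down. -/
def spineOf (F : OForest) (r : ℕ) : List ℕ := spineAux F F.verts.card r

/-- Reattach a vertex: `applyMove F (v, oldp, newp)` makes `v` the new leftmost child of
`newp`, removing it from the child list of `oldp`. -/
def applyMove (F : OForest) (m : ℕ × ℕ × ℕ) : OForest where
  verts := F.verts
  roots := F.roots
  par := Function.update F.par m.1 (some m.2.2)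
  childList := fun w =>
    if w = m.2.1 then (F.childList w).erase m.1
    else if w = m.2.2 then m.1 :: F.childList w
    else F.childList w

/-- The moves of a halving compression of the path `u = (u₁,…,u_k)` (0-indexed here):
`p(u_i) := u_{i+2}` for every odd `i ≤ k-2` (1-indexed), each moved vertex becoming the new
leftmost child of its new parent. -/
def halvMoves (u : List ℕ) : List (ℕ × ℕ × ℕ) :=
  (List.range u.length).filterMap fun j =>
    if j % 2 = 0 ∧ j + 2 < u.length then
      some (u.getD j 0, u.getD (j + 1) 0, u.getD (j + 2) 0)
    else none

/-- Postorder-preserving halving compression of a path. -/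
def halvingCompress (F : OForest) (u : List ℕ) : OForest :=
  (halvMoves u).foldl applyMove F

def insertBefore : List ℕ → ℕ → ℕ → List ℕ
  | [], _, x => [x]
  | a :: rest, tgt, x => if a = tgt then x :: a :: rest else a :: insertBefore rest tgt x

/-- An official halving compression of the path `u = (u₁,…,u_k)`, with the optional
(`ext`) additional reassignment `p(u_{k-1}) := p(u_k)` allowed when `k` is even; if
`p(u_k) = none` this makes `u_{k-1}` a new root (inserted just before the old root in the
root order, preserving postorder). -/
def officialCompress (F : OForest) (u : List ℕ) (ext : Bool) : OForest :=
  let base := halvingCompress F u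
  if ext then
    match F.par (u.getD (u.length - 1) 0) with
    | some w => applyMove base (u.getD (u.length - 2) 0, u.getD (u.length - 1) 0, w)
    | none =>
      { verts := base.verts
        roots := insertBefore base.roots (u.getD (u.length - 1) 0) (u.getD (u.length - 2) 0)
        par := Function.update base.par (u.getD (u.length - 2) 0) none
        childList := fun w =>
          if w = u.getD (u.length - 1) 0 then
            (base.childList w).erase (u.getD (u.length - 2) 0)
          else base.childList w }
  else base

/-- The length of a halving compression of `u`: the number of vertices whose parent
pointer is altered. -/
def compLen (u : List ℕ) (ext : Bool) : ℕ :=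
  (u.length - 1) / 2 + (if ext then 1 else 0)

/-- `u = (u₁,…,u_k)` is a path with `u_{i+1}` the parent of `u_i`. -/
def IsUpPath (F : OForest) (u : List ℕ) : Prop :=
  (∀ v ∈ u, v ∈ F.verts) ∧ u.Chain' (fun a b => F.par a = some b)

/-- `u` is a contiguous subpath (bottom-up) of the spine of one of the trees of `F`. -/
def IsSpinalPath (F : OForest) (u : List ℕ) : Prop :=
  ∃ r ∈ F.roots, u <:+: (F.spineOf r).reverse

/-- A compression of `u` is stunted if it does not terminate at a tree root. -/
def stuntedCount (F : OForest) (u : List ℕ) : ℕ :=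
  if F.par (u.getD (u.length - 1) 0) = none then 0 else 1

/-- Delete a vertex (used only for leaves). -/
def deleteVertex (F : OForest) (v : ℕ) : OForest where
  verts := F.verts.erase v
  roots := F.roots.erase v
  par := fun w => if w = v then none else F.par w
  childList := fun w => (F.childList w).erase v

/-- Strict ancestor relation. -/
def Anc (F : OForest) : ℕ → ℕ → Prop :=
  Relation.TransGen fun a b => F.par a = some b

/-- A spontaneous (free) step: an arbitrary postorder-preserving path compression, i.e.
along some path each vertex keeps its parent or is reattached to a strict ancestor on the
path, everything else being unchanged, so that the postorder is preserved. -/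
def SpontStep (F F' : OForest) : Prop :=
  ∃ u : List ℕ, F.IsUpPath u ∧ F'.verts = F.verts ∧ F'.roots = F.roots ∧ F'.Valid ∧
    (∀ v, v ∉ u → F'.par v = F.par v) ∧
    (∀ v ∈ u, F'.par v = F.par v ∨ ∃ w ∈ u, F.Anc v w ∧ F'.par v = some w) ∧
    F'.postorder = F.postorder

end OForest

namespace OForest

/-- The moves of a total compression of `u = (u₁,…,u_k)` (0-indexed): every `u_i`,
`i ≤ k-2`, is reattached to `u_k`; folding in reverse order prepends `u₁,…,u_{k-2}` in
this order to the child list of `u_k`. -/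
def totalMoves (u : List ℕ) : List (ℕ × ℕ × ℕ) :=
  ((List.range (u.length - 2)).reverse).map fun j =>
    (u.getD j 0, u.getD (j + 1) 0, u.getD (u.length - 1) 0)

/-- Postorder-preserving total compression of a path. -/
def totalCompress (F : OForest) (u : List ℕ) : OForest :=
  (totalMoves u).foldl applyMove F

end OForest

/-!
Both compressions are sequences of elementary moves `(v, p, q)` in which `v` is the leftmost child
of `p` and `p` is the leftmost child of `q`. If `v, x₁, …, xₘ` are the children of `p`, the
postorder of the subtree at `q` starts with those of the subtrees at `v, x₁, …, xₘ`, followed by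
`p`, both before and after the move. The rest of the compression again runs along a path of
leftmost children: after moving `u₁`, halving continues along `u₃, …, u_k`; after moving
`u_{k-2}`, a total compression continues along `u₁, …, u_{k-2}, u_k`.
-/

namespace OForest

variable {F : OForest} {v p q : ℕ} {u : List ℕ}

section Valid

theorem Valid.nodup_childList (hF : F.Valid) (w : ℕ) : (F.childList w).Nodup :=
  hF.2.2.2.2.1 w

theorem Valid.mem_childList_iff (hF : F.Valid) {c w : ℕ} :
    c ∈ F.childList w ↔ c ∈ F.verts ∧ F.par c = some w :=
  hF.2.2.2.2.2.1 w c

theorem Valid.mem_verts_of_par_eq_some (hF : F.Valid) {c w : ℕ} (h : F.par c = some w) :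
    c ∈ F.verts := by
  by_contra hc
  simp [hF.2.2.2.1 c hc] at h

theorem Valid.par_of_mem_childList (hF : F.Valid) {c w : ℕ} (hc : c ∈ F.childList w) :
    F.par c = some w :=
  (hF.mem_childList_iff.1 hc).2

theorem Valid.eq_of_mem_childList (hF : F.Valid) {c w w' : ℕ} (hc : c ∈ F.childList w)
    (hc' : c ∈ F.childList w') : w = w' :=
  Option.some.inj ((hF.par_of_mem_childList hc).symm.trans (hF.par_of_mem_childList hc'))

theorem Valid.notMem_roots_of_mem_childList (hF : F.Valid) {c w : ℕ} (hc : c ∈ F.childList w) :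
    c ∉ F.roots := by
  intro hr
  have hnone := ((hF.2.2.1 c).1 hr).2
  simp [hF.par_of_mem_childList hc] at hnone

theorem Valid.not_anc_self (hF : F.Valid) (v : ℕ) : ¬ F.Anc v v := by
  obtain ⟨dep, hdep⟩ := hF.2.2.2.2.2.2
  have dep_lt {a b : ℕ} (h : F.Anc a b) : dep b < dep a := by
    induction h with
    | single h => exact hdep _ (hF.mem_verts_of_par_eq_some h) _ h
    | tail _ h ih => exact (hdep _ (hF.mem_verts_of_par_eq_some h) _ h).trans ih
  exact fun h => (dep_lt h).false

open Classical in
/-- The proper descendants of a vertex; their number serves as a height function, decreasing from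
a vertex to its children and bounded by the number of vertices. -/
noncomputable def properDescendants (F : OForest) (v : ℕ) : Finset ℕ :=
  F.verts.filter fun w => F.Anc w v

theorem mem_properDescendants {w : ℕ} :
    w ∈ F.properDescendants v ↔ w ∈ F.verts ∧ F.Anc w v := by
  simp [properDescendants]

theorem card_properDescendants_le (F : OForest) (v : ℕ) :
    (F.properDescendants v).card ≤ F.verts.card :=
  Finset.card_le_card fun _ hw => (mem_properDescendants.1 hw).1

theorem Valid.card_properDescendants_lt (hF : F.Valid) {c w : ℕ} (hc : c ∈ F.childList w) :
    (F.properDescendants c).card < (F.properDescendants w).card := by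
  obtain ⟨hcv, hcw⟩ := hF.mem_childList_iff.1 hc
  refine Finset.card_lt_card (Finset.ssubset_iff_of_subset ?_ |>.2 ⟨c, ?_, ?_⟩)
  · exact fun x hx => mem_properDescendants.2
      ⟨(mem_properDescendants.1 hx).1, (mem_properDescendants.1 hx).2.tail hcw⟩
  · exact mem_properDescendants.2 ⟨hcv, .single hcw⟩
  · exact fun h => hF.not_anc_self c (mem_properDescendants.1 h).2

theorem Valid.ne_of_mem_childList (hF : F.Valid) {c w : ℕ} (hc : c ∈ F.childList w) : c ≠ w := by
  rintro rfl
  exact (hF.card_properDescendants_lt hc).false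

end Valid

section SubtreePostorder

/-- The postorder of the subtree at `v`. The fuel `F.verts.card` of `postAux` bounds the height of
every subtree of a valid forest. -/
def subtreePostorder (F : OForest) (v : ℕ) : List ℕ :=
  F.postAux F.verts.card v

theorem Valid.postAux_succ_eq (hF : F.Valid) (n : ℕ) (v : ℕ)
    (hn : (F.properDescendants v).card ≤ n) : F.postAux (n + 1) v = F.postAux n v := by
  induction n generalizing v with
  | zero =>
    have hleaf : F.childList v = [] :=
      List.eq_nil_iff_forall_not_mem.2 fun c hc => by
        have := hF.card_properDescendants_lt hc
        omega
    simp [postAux, hleaf]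
  | succ n ih =>
    rw [postAux, postAux]
    congr 2
    refine List.map_congr_left fun c hc => ih c ?_
    have := hF.card_properDescendants_lt hc
    omega

theorem Valid.subtreePostorder_eq (hF : F.Valid) (v : ℕ) :
    F.subtreePostorder v = ((F.childList v).map F.subtreePostorder).flatten ++ [v] :=
  (hF.postAux_succ_eq _ v (F.card_properDescendants_le v)).symm

theorem Valid.eq_subtreePostorder (hF : F.Valid) {f : ℕ → List ℕ}
    (hf : ∀ v, f v = ((F.childList v).map f).flatten ++ [v]) (v : ℕ) :
    f v = F.subtreePostorder v := by
  induction v using (measure fun w => (F.properDescendants w).card).wf.induction with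
  | _ v ih =>
    rw [hf, hF.subtreePostorder_eq, List.map_congr_left]
    exact fun c hc => ih c (hF.card_properDescendants_lt hc)

end SubtreePostorder

section ApplyMove

theorem childList_applyMove_oldParent (F : OForest) (v p q : ℕ) :
    (F.applyMove (v, p, q)).childList p = (F.childList p).erase v := by
  simp [applyMove]

theorem childList_applyMove_newParent (F : OForest) (v : ℕ) (h : q ≠ p) :
    (F.applyMove (v, p, q)).childList q = v :: F.childList q := by
  simp [applyMove, h]

theorem childList_applyMove_of_ne (F : OForest) (v : ℕ) {w : ℕ} (hp : w ≠ p) (hq : w ≠ q) :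
    (F.applyMove (v, p, q)).childList w = F.childList w := by
  simp [applyMove, hp, hq]

theorem par_applyMove (F : OForest) (v p q x : ℕ) :
    (F.applyMove (v, p, q)).par x = if x = v then some q else F.par x :=
  Function.update_apply _ _ _ _

theorem Valid.nodup_childList_applyMove (hF : F.Valid) (hvq : v ∉ F.childList q) (w : ℕ) :
    ((F.applyMove (v, p, q)).childList w).Nodup := by
  have := hF.nodup_childList
  simp only [OForest.applyMove]
  split_ifs with hp hq
  · exact (this w).erase v
  · exact List.nodup_cons.2 ⟨hq ▸ hvq, this w⟩
  · exact this w

theorem Valid.mem_childList_applyMove_iff (hF : F.Valid) (hvp : v ∈ F.childList p) (hqp : q ≠ p)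
    {c w : ℕ} : c ∈ (F.applyMove (v, p, q)).childList w ↔
      c ∈ F.verts ∧ (F.applyMove (v, p, q)).par c = some w := by
  obtain ⟨hv, hpar_v⟩ := hF.mem_childList_iff.1 hvp
  rw [par_applyMove]
  rcases eq_or_ne w p with rfl | hwp
  · rw [childList_applyMove_oldParent, (hF.nodup_childList w).mem_erase_iff, hF.mem_childList_iff]
    grind
  rcases eq_or_ne w q with rfl | hwq
  · rw [childList_applyMove_newParent F v hqp, List.mem_cons, hF.mem_childList_iff]
    grind
  · rw [childList_applyMove_of_ne F v hwp hwq, hF.mem_childList_iff]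
    grind

theorem Valid.applyMove (hF : F.Valid) (hvp : v ∈ F.childList p) (hpq : p ∈ F.childList q) :
    (F.applyMove (v, p, q)).Valid := by
  obtain ⟨hv, hpar_v⟩ := hF.mem_childList_iff.1 hvp
  obtain ⟨hp, hpar_p⟩ := hF.mem_childList_iff.1 hpq
  have hqp : q ≠ p := (hF.ne_of_mem_childList hpq).symm
  have hvq : v ∉ F.childList q := fun h => hqp (hF.eq_of_mem_childList h hvp)
  obtain ⟨hpar, hroots, hmem_roots, hout, -, -, dep, hdep⟩ := id hF
  have hq : q ∈ F.verts := hpar p hp q hpar_p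
  have hdep_vq : dep q < dep v := (hdep p hp q hpar_p).trans (hdep v hv p hpar_v)
  refine ⟨fun x (hx : x ∈ F.verts) w hw => ?_, hroots, fun x => ?_,
    fun x (hx : x ∉ F.verts) => ?_, hF.nodup_childList_applyMove hvq,
    fun w x => hF.mem_childList_applyMove_iff hvp hqp, dep, fun x (hx : x ∈ F.verts) w hw => ?_⟩
  · change w ∈ F.verts
    grind [par_applyMove]
  · change x ∈ F.roots ↔ x ∈ F.verts ∧ _
    grind [par_applyMove]
  · grind [par_applyMove]
  · grind [par_applyMove]

/-- `v` is the leftmost child of `p`; the lower vertex comes first, as in a bottom-up path. -/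
def IsLeftmostChild (F : OForest) (v p : ℕ) : Prop :=
  (F.childList p).head? = some v

theorem IsLeftmostChild.mem_childList (h : F.IsLeftmostChild v p) : v ∈ F.childList p :=
  List.mem_of_mem_head? h

theorem isLeftmostChild_applyMove (F : OForest) (v : ℕ) (h : q ≠ p) :
    (F.applyMove (v, p, q)).IsLeftmostChild v q := by
  simp [IsLeftmostChild, childList_applyMove_newParent F v h]

theorem map_update_of_notMem {α β : Type*} [DecidableEq α] {l : List α} {a : α} (f : α → β)
    (b : β) (ha : a ∉ l) : l.map (Function.update f a b) = l.map f :=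
  List.map_congr_left fun _ hc => Function.update_of_ne (ne_of_mem_of_not_mem hc ha) _ _

theorem Valid.subtreePostorder_applyMove (hF : F.Valid) (hvp : F.IsLeftmostChild v p)
    (hpq : F.IsLeftmostChild p q) :
    (F.applyMove (v, p, q)).subtreePostorder = Function.update F.subtreePostorder p
      (((F.childList p).tail.map F.subtreePostorder).flatten ++ [p]) := by
  obtain ⟨A, hA⟩ := List.head?_eq_some_iff.1 hvp
  obtain ⟨B, hB⟩ := List.head?_eq_some_iff.1 hpq
  have hv_ne : v ≠ p := hF.ne_of_mem_childList hvp.mem_childList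
  have hq_ne : q ≠ p := (hF.ne_of_mem_childList hpq.mem_childList).symm
  have hpA : p ∉ A := fun h => hF.ne_of_mem_childList (hA ▸ List.mem_cons_of_mem v h) rfl
  have hpB : p ∉ B := (List.nodup_cons.1 (hB ▸ hF.nodup_childList q)).1
  set f := Function.update F.subtreePostorder p
    (((F.childList p).tail.map F.subtreePostorder).flatten ++ [p]) with hf
  have f_p : f p = (A.map F.subtreePostorder).flatten ++ [p] := by simp [hf, hA]
  have f_of_ne {w : ℕ} (hw : w ≠ p) : f w = F.subtreePostorder w := Function.update_of_ne hw _ _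
  have map_f {l : List ℕ} (hl : p ∉ l) : l.map f = l.map F.subtreePostorder :=
    map_update_of_notMem _ _ hl
  -- `f` satisfies the recursion that determines the postorders of the subtrees after the move.
  suffices ∀ w, f w = (((F.applyMove (v, p, q)).childList w).map f).flatten ++ [w] from
    (funext ((hF.applyMove hvp.mem_childList hpq.mem_childList).eq_subtreePostorder this)).symm
  intro w
  rcases eq_or_ne w p with rfl | hwp
  · simp [childList_applyMove_oldParent, hA, map_f hpA, f_p]
  rcases eq_or_ne w q with rfl | hwq
  · have subtree_p : F.subtreePostorder p = F.subtreePostorder v ++ f p := by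
      simp [f_p, hF.subtreePostorder_eq p, hA]
    calc f w = F.subtreePostorder w := f_of_ne hwp
      _ = F.subtreePostorder v ++ f p ++ (B.map F.subtreePostorder).flatten ++ [w] := by
        simp [hF.subtreePostorder_eq w, hB, subtree_p]
      _ = (((F.applyMove (v, p, w)).childList w).map f).flatten ++ [w] := by
        simp [childList_applyMove_newParent F v hq_ne, hB, map_f hpB, f_of_ne hv_ne]
  · have hpw : p ∉ F.childList w := fun h => hwq (hF.eq_of_mem_childList h hpq.mem_childList)
    rw [childList_applyMove_of_ne F v hwp hwq, map_f hpw, ← hF.subtreePostorder_eq, f_of_ne hwp]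

theorem Valid.postorder_applyMove (hF : F.Valid) (hvp : F.IsLeftmostChild v p)
    (hpq : F.IsLeftmostChild p q) : (F.applyMove (v, p, q)).postorder = F.postorder := by
  have hp : p ∉ F.roots := hF.notMem_roots_of_mem_childList hpq.mem_childList
  calc (F.applyMove (v, p, q)).postorder
      = (F.roots.map (F.applyMove (v, p, q)).subtreePostorder).flatten := rfl
    _ = (F.roots.map F.subtreePostorder).flatten := by
      rw [hF.subtreePostorder_applyMove hvp hpq, map_update_of_notMem _ _ hp]
    _ = F.postorder := rfl

end ApplyMove

section LeftmostPath

/-- An upward path, listed from the bottom, in which each vertex is the leftmost child of the next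
one; the path may lie anywhere in the forest. -/
def IsLeftmostPath (F : OForest) (u : List ℕ) : Prop :=
  u.IsChain F.IsLeftmostChild

theorem IsLeftmostPath.nodup (hu : F.IsLeftmostPath u) (hF : F.Valid) : u.Nodup := by
  have hchain : u.IsChain fun a b => (F.properDescendants a).card < (F.properDescendants b).card :=
    hu.imp fun _ _ h => hF.card_properDescendants_lt h.mem_childList
  have : IsTrans ℕ fun a b => (F.properDescendants a).card < (F.properDescendants b).card :=
    ⟨fun _ _ _ => lt_trans⟩
  exact hchain.pairwise.imp fun h => by rintro rfl; exact h.false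

theorem IsLeftmostPath.applyMove (hu : F.IsLeftmostPath u) (hp : p ∉ u.tail) (hq : q ∉ u.tail) :
    (F.applyMove (v, p, q)).IsLeftmostPath u := by
  refine List.IsChain.imp_of_mem_tail_imp (fun a b _ hb hab => ?_) hu
  have hbp : b ≠ p := by rintro rfl; exact hp hb
  have hbq : b ≠ q := by rintro rfl; exact hq hb
  rwa [IsLeftmostChild, childList_applyMove_of_ne F v hbp hbq]

theorem head?_spineAux (F : OForest) (n v : ℕ) : (F.spineAux n v).head? = some v := by
  cases n with
  | zero => rfl
  | succ n => rw [spineAux]; split <;> rfl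

theorem isLeftmostPath_reverse_spineAux (F : OForest) (n v : ℕ) :
    F.IsLeftmostPath (F.spineAux n v).reverse := by
  rw [IsLeftmostPath, List.isChain_reverse]
  induction n generalizing v with
  | zero => exact .singleton v
  | succ n ih =>
    rw [spineAux]
    split
    · exact .singleton v
    · next c t hc =>
      refine List.isChain_cons.2 ⟨fun w hw => ?_, ih c⟩
      obtain rfl : c = w := by simpa [head?_spineAux] using hw
      simp [IsLeftmostChild, hc]

theorem IsSpinalPath.isLeftmostPath (hu : F.IsSpinalPath u) : F.IsLeftmostPath u := by
  obtain ⟨r, -, hr⟩ := hu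
  exact (F.isLeftmostPath_reverse_spineAux _ r).infix hr

end LeftmostPath

section Compressions

theorem halvMoves_cons_cons_cons (a b c : ℕ) (t : List ℕ) :
    halvMoves (a :: b :: c :: t) = (a, b, c) :: halvMoves (c :: t) := by
  have hrange : List.range (t.length + 3) = 0 :: 1 :: (List.range (t.length + 1)).map (· + 2) := by
    simp [List.range_succ_eq_map]
  simp [halvMoves, hrange, List.filterMap_map]

theorem totalMoves_append_triple (s : List ℕ) (a b c : ℕ) :
    totalMoves (s ++ [a, b, c]) = (a, b, c) :: totalMoves (s ++ [a, c]) := by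
  have getD_eq {j : ℕ} (hj : j ≤ s.length) :
      (s ++ [a, b, c]).getD j 0 = (s ++ [a, c]).getD j 0 := by
    rcases hj.lt_or_eq with hj | rfl
    · simp only [List.getD_append _ _ _ _ hj]
    · simp
  suffices ∀ j < s.length, (s ++ [a, b, c]).getD j 0 = (s ++ [a, c]).getD j 0 ∧
      (s ++ [a, b, c]).getD (j + 1) 0 = (s ++ [a, c]).getD (j + 1) 0 by
    simpa [totalMoves, List.range_succ] using this
  exact fun j hj => ⟨getD_eq hj.le, getD_eq hj⟩

theorem Valid.postorder_halvingCompress {F : OForest} {u : List ℕ} (hF : F.Valid)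
    (hu : F.IsLeftmostPath u) : (F.halvingCompress u).postorder = F.postorder := by
  match u with
  | [] | [_] | [_, _] => rfl
  | a :: b :: c :: t =>
    obtain ⟨hab, hbc, hct⟩ : F.IsLeftmostChild a b ∧ F.IsLeftmostChild b c ∧
        F.IsLeftmostPath (c :: t) := by
      simpa only [IsLeftmostPath, List.isChain_cons_cons] using hu
    obtain ⟨hb, hc⟩ : b ∉ t ∧ c ∉ t := by have := hu.nodup hF; grind
    calc (F.halvingCompress (a :: b :: c :: t)).postorder
        = ((F.applyMove (a, b, c)).halvingCompress (c :: t)).postorder := by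
          simp only [halvingCompress, halvMoves_cons_cons_cons, List.foldl_cons]
      _ = (F.applyMove (a, b, c)).postorder :=
          postorder_halvingCompress (hF.applyMove hab.mem_childList hbc.mem_childList)
            (hct.applyMove hb hc)
      _ = F.postorder := hF.postorder_applyMove hab hbc

theorem Valid.postorder_totalCompress_append_pair (s : List ℕ) (b c : ℕ) {F : OForest}
    (hF : F.Valid) (hu : F.IsLeftmostPath (s ++ [b, c])) :
    (F.totalCompress (s ++ [b, c])).postorder = F.postorder := by
  induction s using List.reverseRecOn generalizing F b with
  | nil => rfl
  | append_singleton s a ih =>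
    simp only [List.append_assoc, List.cons_append, List.nil_append] at hu ⊢
    obtain ⟨hsa, hab, hbc⟩ : F.IsLeftmostPath (s ++ [a]) ∧ F.IsLeftmostChild a b ∧
        F.IsLeftmostChild b c := by
      simpa [IsLeftmostPath, List.isChain_append_cons_cons] using hu
    obtain ⟨hb, hc⟩ : b ∉ s ++ [a] ∧ c ∉ s ++ [a] := by have := hu.nodup hF; grind
    have hsa' : (F.applyMove (a, b, c)).IsLeftmostPath (s ++ [a]) :=
      hsa.applyMove (fun h => hb (List.mem_of_mem_tail h)) fun h => hc (List.mem_of_mem_tail h)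
    have hac := isLeftmostChild_applyMove F a (hF.ne_of_mem_childList hbc.mem_childList).symm
    have hsac : (F.applyMove (a, b, c)).IsLeftmostPath (s ++ [a, c]) :=
      List.isChain_append_cons_cons.2 ⟨hsa', hac, .singleton c⟩
    calc (F.totalCompress (s ++ [a, b, c])).postorder
        = ((F.applyMove (a, b, c)).totalCompress (s ++ [a, c])).postorder := by
          simp only [totalCompress, totalMoves_append_triple, List.foldl_cons]
      _ = (F.applyMove (a, b, c)).postorder :=
          ih a (hF.applyMove hab.mem_childList hbc.mem_childList) hsac
      _ = F.postorder := hF.postorder_applyMove hab hbc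

theorem Valid.postorder_totalCompress (hF : F.Valid) (hu : F.IsLeftmostPath u) :
    (F.totalCompress u).postorder = F.postorder := by
  rcases List.eq_nil_or_concat' u with rfl | ⟨l, c, rfl⟩
  · rfl
  rcases List.eq_nil_or_concat' l with rfl | ⟨s, b, rfl⟩
  · rfl
  · simp only [List.append_assoc, List.cons_append, List.nil_append] at hu ⊢
    exact hF.postorder_totalCompress_append_pair s b c hu

end Compressions

end OForest

theorem spinal_compressions_preserve_postorder_general (F : OForest) (u : List ℕ)
    (hval : F.Valid) (hleft : F.IsLeftmostPath u) :
    (F.halvingCompress u).postorder = F.postorder ∧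
    (F.totalCompress u).postorder = F.postorder :=
  ⟨hval.postorder_halvingCompress hleft, hval.postorder_totalCompress hleft⟩

/-- for a contiguous subpath `u = (u₁,…,u_k)`, `k ≥ 3`, of the spine of one
of the trees of a rooted ordered forest `F`: (a) the halving compression (each reattached
`u_i` becoming the new leftmost child of `u_{i+2}`) leaves the postorder of `F` unchanged,
and (b) the total compression (which prepends `u₁,…,u_{k-2}` in this order to the child
list of `u_k`) also leaves the postorder unchanged. -/
theorem spinal_compressions_preserve_postorder (F : OForest) (u : List ℕ)
    (hval : F.Valid) (hpath : F.IsUpPath u) (hk : 3 ≤ u.length)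
    (hspine : F.IsSpinalPath u) :
    (F.halvingCompress u).postorder = F.postorder ∧
    (F.totalCompress u).postorder = F.postorder :=
  spinal_compressions_preserve_postorder_general F u hval hspine.isLeftmostPath
end

section
/- Let F be a rooted forest with N vertices, modified by an arbitrary interleaved sequence of halving path compressions and deletions of leaves. Then: (a) no halving path compression increases the depth of any surviving vertex; (b) every halving compression along a path of at least 4 vertices that terminates at a root strictly increases the number of vertices of depth at most 2; and consequently (c) the total number of halving compressions along paths of at least 4 vertices terminating at a root, over the entire sequence of operations, is at most N. -/
/-- A rooted forest on a finite vertex set: a finite set of vertices together with a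
parent function (`none` at roots). -/
structure PForest where
  verts : Finset ℕ
  par : ℕ → Option ℕ

namespace PForest

/-- Well-formedness: parents of vertices are vertices, non-vertices have no parent, and
iterating the parent function terminates (witnessed by a rank function). -/
def Valid (F : PForest) : Prop :=
  (∀ v ∈ F.verts, ∀ u, F.par v = some u → u ∈ F.verts) ∧
  (∀ v, v ∉ F.verts → F.par v = none) ∧
  (∃ dep : ℕ → ℕ, ∀ v ∈ F.verts, ∀ u, F.par v = some u → dep u < dep v)

/-- `u = (u₁,…,u_k)` is a path with `u_{i+1}` the parent of `u_i`. -/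
def IsUpPath (F : PForest) (u : List ℕ) : Prop :=
  (∀ v ∈ u, v ∈ F.verts) ∧ u.Chain' (fun a b => F.par a = some b)

def setPar (F : PForest) (v : ℕ) (p : Option ℕ) : PForest :=
  ⟨F.verts, Function.update F.par v p⟩

/-- Halving compression of a path `u = (u₁,…,u_k)` (here 0-indexed: `u.getD j` is
`u_{j+1}`): set `p(u_i) := u_{i+2}` for every odd `i ≤ k-2`; if `k` is even it may
additionally (flag `ext`) set `p(u_{k-1}) := p(u_k)`. -/
def halvApply (F : PForest) (u : List ℕ) (ext : Bool) : PForest :=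
  let base :=
    ((List.range u.length).filterMap fun j =>
        if j % 2 = 0 ∧ j + 2 < u.length then some (u.getD j 0, u.getD (j + 2) 0)
        else none).foldl
      (fun G m => G.setPar m.1 (some m.2)) F
  if ext then base.setPar (u.getD (u.length - 2) 0) (F.par (u.getD (u.length - 1) 0))
  else base

/-- Deletion of a vertex. -/
def deleteVertex (F : PForest) (v : ℕ) : PForest :=
  ⟨F.verts.erase v, fun w => if w = v then none else F.par w⟩

def depthAux (F : PForest) : ℕ → ℕ → ℕ
  | 0, _ => 0
  | fuel + 1, v =>
    match F.par v with
    | none => 0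
    | some u => depthAux F fuel u + 1

/-- Depth of a vertex: its number of strict ancestors (roots have depth 0). -/
def depth (F : PForest) (v : ℕ) : ℕ := depthAux F F.verts.card v

/-- A leaf: a vertex with no children. -/
def IsLeaf (F : PForest) (v : ℕ) : Prop := ¬ ∃ w ∈ F.verts, F.par w = some v

end PForest

open PForest

/-- Executions: an arbitrary interleaved sequence of halving path compressions and
deletions of leaves; `Reach F c G` means `G` is reached from `F` performing `c` halving
compressions along paths of at least 4 vertices that terminate at a root. -/
inductive Reach : PForest → ℕ → PForest → Prop
  | refl (F : PForest) : Reach F 0 F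
  | comp (F G : PForest) (u : List ℕ) (ext : Bool) (c : ℕ)
      (hu : F.IsUpPath u) (hlen : 2 ≤ u.length)
      (hext : ext = true → u.length % 2 = 0)
      (h : Reach (F.halvApply u ext) c G) :
      Reach F
        (c + (if 4 ≤ u.length ∧ F.par (u.getD (u.length - 1) 0) = none then 1 else 0)) G
  | del (F G : PForest) (v : ℕ) (c : ℕ)
      (hv : v ∈ F.verts) (hleaf : F.IsLeaf v)
      (h : Reach (F.deleteVertex v) c G) :
      Reach F c G

/-!
A halving compression attaches some vertices of the path to their grandparents, all at once, so
every new parent is an old strict ancestor. The same holds after deleting a vertex, and no operation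
with this property increases a depth. On a path `u₁, …, u_k` with `k ≥ 4` ending at a root, the
vertex `u_i` with `i` odd and `i ∈ {k - 4, k - 3}` has depth at least `3`, and compression links it
to `u_{i+2}`, which then has depth at most `1`. Hence the number of vertices of depth at least `3`
never grows and drops at each such compression.
-/

namespace PForest

section Depth

variable {F : PForest} {v w : ℕ}

theorem depthAux_of_par_eq_none (h : F.par v = none) (n : ℕ) : F.depthAux n v = 0 := by
  cases n <;> simp [depthAux, h]

theorem depthAux_succ_of_par_eq_some (h : F.par v = some w) (n : ℕ) :
    F.depthAux (n + 1) v = F.depthAux n w + 1 := by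
  simp [depthAux, h]

theorem depthAux_le_succ (F : PForest) (n v : ℕ) : F.depthAux n v ≤ F.depthAux (n + 1) v := by
  induction n generalizing v with
  | zero => simp [depthAux]
  | succ n ih =>
    cases h : F.par v with
    | none => simp [depthAux_of_par_eq_none h]
    | some w => simpa [depthAux_succ_of_par_eq_some h] using ih w

theorem depthAux_mono (F : PForest) (v : ℕ) : Monotone (F.depthAux · v) :=
  monotone_nat_of_le_succ (F.depthAux_le_succ · v)

theorem depthAux_succ_le (F : PForest) (n v : ℕ) : F.depthAux (n + 1) v ≤ F.depthAux n v + 1 := by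
  induction n generalizing v with
  | zero => cases h : F.par v <;> simp [depthAux, h]
  | succ n ih =>
    cases h : F.par v with
    | none => simp [depthAux_of_par_eq_none h]
    | some w => simpa [depthAux_succ_of_par_eq_some h] using ih w

theorem depth_of_par_eq_none (h : F.par v = none) : F.depth v = 0 :=
  depthAux_of_par_eq_none h _

theorem depth_le_of_par_eq_some (h : F.par v = some w) : F.depth v ≤ F.depth w + 1 :=
  (F.depthAux_le_succ _ v).trans_eq (depthAux_succ_of_par_eq_some h _)

end Depth

section Ancestor

variable {F : PForest} {v w : ℕ}

/-- `F.Ancestor v w` is the strict ancestor relation: `w` is reached from `v` by iterating the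
parent function of `F` at least once. -/
def Ancestor (F : PForest) : ℕ → ℕ → Prop :=
  Relation.TransGen fun v w => F.par v = some w

theorem Ancestor.depthAux_lt (h : F.Ancestor v w) (n : ℕ) :
    F.depthAux n w < F.depthAux (n + 1) v := by
  induction h with
  | single h => simp [depthAux_succ_of_par_eq_some h]
  | @tail x w _ hxw ih =>
    have : F.depthAux n w + 1 ≤ F.depthAux n x + 1 :=
      depthAux_succ_of_par_eq_some hxw n ▸ F.depthAux_succ_le n x
    omega

theorem Ancestor.exists_par_eq_some (h : F.Ancestor v w) : ∃ x, F.par v = some x :=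
  let ⟨x, hx, _⟩ := Relation.TransGen.head'_iff.1 h
  ⟨x, hx⟩

theorem Valid.mem_verts_of_par (hF : F.Valid) (h : F.par v = some w) :
    v ∈ F.verts ∧ w ∈ F.verts := by
  have hv : v ∈ F.verts := by
    by_contra hv
    simp [hF.2.1 v hv] at h
  exact ⟨hv, hF.1 v hv w h⟩

theorem Valid.mem_verts_of_ancestor (hF : F.Valid) (h : F.Ancestor v w) :
    v ∈ F.verts ∧ w ∈ F.verts := by
  obtain ⟨x, hvx⟩ := h.exists_par_eq_some
  obtain ⟨y, -, hyw⟩ := Relation.TransGen.tail'_iff.1 h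
  exact ⟨(hF.mem_verts_of_par hvx).1, (hF.mem_verts_of_par hyw).2⟩

theorem Valid.exists_rank_lt (hF : F.Valid) :
    ∃ rank : ℕ → ℕ, ∀ v w, F.Ancestor v w → rank w < rank v := by
  obtain ⟨rank, hrank⟩ := hF.2.2
  refine ⟨rank, fun v w h => ?_⟩
  induction h with
  | single h => exact hrank _ (hF.mem_verts_of_par h).1 _ h
  | tail _ h ih => exact (hrank _ (hF.mem_verts_of_par h).1 _ h).trans ih

end Ancestor

section UpPath

variable {F : PForest} {u : List ℕ} {j : ℕ}

theorem IsUpPath.par_getD (hu : F.IsUpPath u) (hj : j + 1 < u.length) :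
    F.par (u.getD j 0) = some (u.getD (j + 1) 0) := by
  rw [List.getD_eq_getElem _ _ (by omega), List.getD_eq_getElem _ _ hj]
  exact List.isChain_iff_getElem.1 hu.2 j hj

theorem IsUpPath.nodup (hF : F.Valid) (hu : F.IsUpPath u) : u.Nodup := by
  obtain ⟨rank, hrank⟩ := hF.exists_rank_lt
  have hchain : u.IsChain (fun a b => rank b < rank a) :=
    hu.2.imp fun a b h => hrank a b (.single h)
  have : IsTrans ℕ (fun a b => rank b < rank a) := ⟨fun _ _ _ h₁ h₂ => h₂.trans h₁⟩
  refine hchain.pairwise.imp ?_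
  rintro a _ h rfl
  exact h.false

theorem IsUpPath.length_le_card_verts (hF : F.Valid) (hu : F.IsUpPath u) :
    u.length ≤ F.verts.card := by
  rw [← List.toFinset_card_of_nodup (hu.nodup hF)]
  exact Finset.card_le_card fun v hv => hu.1 v (List.mem_toFinset.1 hv)

theorem IsUpPath.le_depthAux_getD (hu : F.IsUpPath u) {n : ℕ} (h : j + n < u.length) :
    n ≤ F.depthAux n (u.getD j 0) := by
  induction n generalizing j with
  | zero => exact Nat.zero_le _
  | succ n ih =>
    rw [depthAux_succ_of_par_eq_some (hu.par_getD (by omega))]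
    exact Nat.succ_le_succ (ih (by omega))

theorem IsUpPath.le_depth_getD (hF : F.Valid) (hu : F.IsUpPath u) {n : ℕ}
    (h : j + n < u.length) : n ≤ F.depth (u.getD j 0) := by
  have hn : n ≤ F.verts.card := by
    have := hu.length_le_card_verts hF
    omega
  exact (hu.le_depthAux_getD h).trans (F.depthAux_mono _ hn)

end UpPath

section Contraction

variable {F G : PForest}

/-- `G.IsContraction F` says that `G` lives on some of the vertices of `F` and that every parent in
`G` is a strict ancestor in `F`. It is the common form of compressions and deletions. -/
structure IsContraction (G F : PForest) : Prop where
  verts_subset : G.verts ⊆ F.verts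
  ancestor : ∀ {v w}, G.par v = some w → F.Ancestor v w

theorem IsContraction.depthAux_le (h : G.IsContraction F) (n v : ℕ) :
    G.depthAux n v ≤ F.depthAux n v := by
  induction n generalizing v with
  | zero => simp [depthAux]
  | succ n ih =>
    cases hv : G.par v with
    | none => simp [depthAux_of_par_eq_none hv]
    | some w =>
      calc G.depthAux (n + 1) v = G.depthAux n w + 1 := depthAux_succ_of_par_eq_some hv n
        _ ≤ F.depthAux n w + 1 := Nat.succ_le_succ (ih w)
        _ ≤ F.depthAux (n + 1) v := (h.ancestor hv).depthAux_lt n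

theorem IsContraction.depth_le (h : G.IsContraction F) (v : ℕ) : G.depth v ≤ F.depth v :=
  (h.depthAux_le _ v).trans (F.depthAux_mono v (Finset.card_le_card h.verts_subset))

theorem IsContraction.par_eq_none (h : G.IsContraction F) {v : ℕ} (hv : F.par v = none) :
    G.par v = none := by
  by_contra hG
  obtain ⟨w, hw⟩ := Option.ne_none_iff_exists'.1 hG
  obtain ⟨x, hx⟩ := (h.ancestor hw).exists_par_eq_some
  simp [hv] at hx

theorem IsContraction.valid (h : G.IsContraction F) (hF : F.Valid)
    (hmem : ∀ v w, G.par v = some w → v ∈ G.verts ∧ w ∈ G.verts) : G.Valid := by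
  obtain ⟨rank, hrank⟩ := hF.exists_rank_lt
  refine ⟨fun v _ w hw => (hmem v w hw).2, fun v hv => ?_, rank,
    fun v _ w hw => hrank v w (h.ancestor hw)⟩
  by_contra hG
  obtain ⟨w, hw⟩ := Option.ne_none_iff_exists'.1 hG
  exact hv (hmem v w hw).1

/-- The vertices of depth greater than `2`, whose number is the potential that pays for the
compressions terminating at a root. -/
def deepVerts (F : PForest) : Finset ℕ :=
  {v ∈ F.verts | 2 < F.depth v}

theorem mem_deepVerts {v : ℕ} : v ∈ F.deepVerts ↔ v ∈ F.verts ∧ 2 < F.depth v :=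
  Finset.mem_filter

theorem card_depth_le_two_add_card_deepVerts (F : PForest) :
    (F.verts.filter fun v => F.depth v ≤ 2).card + F.deepVerts.card = F.verts.card := by
  simpa only [deepVerts, not_le] using
    Finset.card_filter_add_card_filter_not (s := F.verts) fun v => F.depth v ≤ 2

theorem IsContraction.deepVerts_subset (h : G.IsContraction F) : G.deepVerts ⊆ F.deepVerts := by
  intro v hv
  rw [mem_deepVerts] at hv ⊢
  exact ⟨h.verts_subset hv.1, hv.2.trans_le (h.depth_le v)⟩

theorem isContraction_deleteVertex (F : PForest) (v : ℕ) : (F.deleteVertex v).IsContraction F where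
  verts_subset := Finset.erase_subset _ _
  ancestor {a b} h := .single (by simp_all [deleteVertex])

theorem Valid.deleteVertex (hF : F.Valid) {v : ℕ} (hv : F.IsLeaf v) : (F.deleteVertex v).Valid := by
  refine (F.isContraction_deleteVertex v).valid hF fun a b h => ?_
  obtain ⟨hav, hab⟩ : a ≠ v ∧ F.par a = some b := by simpa [PForest.deleteVertex] using h
  obtain ⟨ha, hb⟩ := hF.mem_verts_of_par hab
  have hbv : b ≠ v := fun hbv => hv ⟨a, ha, hbv ▸ hab⟩
  exact ⟨Finset.mem_erase.2 ⟨hav, ha⟩, Finset.mem_erase.2 ⟨hbv, hb⟩⟩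

end Contraction

section Promotion

variable {F : PForest} {S : Finset ℕ}

/-- The parent of the parent, `none` for vertices of depth at most `1`. -/
def grandpar (F : PForest) (v : ℕ) : Option ℕ :=
  (F.par v).bind F.par

/-- The forest obtained from `F` by attaching the vertices of `S` simultaneously to their
grandparents in `F`; a vertex of `S` without a grandparent becomes a root. -/
def promote (F : PForest) (S : Finset ℕ) : PForest :=
  ⟨F.verts, fun v => if v ∈ S then F.grandpar v else F.par v⟩

theorem par_promote_of_mem {v : ℕ} (hv : v ∈ S) : (F.promote S).par v = F.grandpar v :=
  if_pos hv

theorem promote_empty (F : PForest) : F.promote ∅ = F := by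
  simp [promote]

theorem setPar_promote (F : PForest) (S : Finset ℕ) (v : ℕ) :
    (F.promote S).setPar v (F.grandpar v) = F.promote (insert v S) := by
  simp only [setPar, promote, mk.injEq, true_and]
  ext1 w
  by_cases hw : w = v <;> simp [hw]

theorem foldl_setPar_eq_promote (F : PForest) (l : List (ℕ × ℕ))
    (hl : ∀ m ∈ l, F.grandpar m.1 = some m.2) :
    l.foldl (fun G m => G.setPar m.1 (some m.2)) F = F.promote (l.map Prod.fst).toFinset := by
  induction l using List.reverseRecOn with
  | nil => simp [promote_empty]
  | append_singleton l m ih =>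
    simp only [List.forall_mem_append, List.forall_mem_singleton] at hl
    rw [List.foldl_append, ih hl.1, List.foldl_cons, List.foldl_nil, ← hl.2, setPar_promote]
    congr 1
    ext
    simp

theorem isContraction_promote (F : PForest) (S : Finset ℕ) : (F.promote S).IsContraction F where
  verts_subset := subset_rfl
  ancestor {v w} h := by
    by_cases hv : v ∈ S
    · rw [par_promote_of_mem hv, grandpar, Option.bind_eq_some_iff] at h
      obtain ⟨x, hvx, hxw⟩ := h
      exact .tail (.single hvx) hxw
    · exact .single (by simpa [promote, hv] using h)

theorem Valid.promote (hF : F.Valid) (S : Finset ℕ) : (F.promote S).Valid :=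
  (F.isContraction_promote S).valid hF fun _ _ h =>
    hF.mem_verts_of_ancestor ((F.isContraction_promote S).ancestor h)

end Promotion

section Halving

variable {F : PForest} {u : List ℕ}

theorem IsUpPath.grandpar_getD (hu : F.IsUpPath u) {j : ℕ} (hj : j + 2 < u.length) :
    F.grandpar (u.getD j 0) = some (u.getD (j + 2) 0) := by
  rw [grandpar, hu.par_getD (by omega), Option.bind_some, hu.par_getD (by omega)]

/-- The vertices of `u` that the halving compression of `u` promotes, 0-indexed and with the flag
`ext` as in `halvApply`. -/
def halvingSet (u : List ℕ) (ext : Bool) : Finset ℕ :=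
  {j ∈ Finset.range u.length |
    j % 2 = 0 ∧ j + 2 < u.length ∨ ext = true ∧ j + 2 = u.length}.image (u.getD · 0)

theorem getD_mem_halvingSet (ext : Bool) {j : ℕ} (hj : j % 2 = 0) (hju : j + 2 < u.length) :
    u.getD j 0 ∈ halvingSet u ext :=
  Finset.mem_image_of_mem _ <|
    Finset.mem_filter.2 ⟨Finset.mem_range.2 (by omega), .inl ⟨hj, hju⟩⟩

theorem halvApply_false_eq_promote (hu : F.IsUpPath u) :
    F.halvApply u false = F.promote (halvingSet u false) := by
  refine (foldl_setPar_eq_promote F _ ?_).trans ?_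
  · simp only [List.mem_filterMap, Option.ite_none_right_eq_some]
    rintro _ ⟨j, -, ⟨-, hju⟩, ⟨⟩⟩
    exact hu.grandpar_getD hju
  · congr 1
    ext v
    simp [halvingSet, and_assoc]

theorem halvingSet_true (hlen : 2 ≤ u.length) :
    halvingSet u true = insert (u.getD (u.length - 2) 0) (halvingSet u false) := by
  rw [halvingSet, halvingSet, ← Finset.image_insert (u.getD · 0)]
  congr 1
  ext j
  simp only [Finset.mem_filter, Finset.mem_range, Finset.mem_insert]
  grind

theorem halvApply_eq_promote (hu : F.IsUpPath u) (hlen : 2 ≤ u.length) (ext : Bool) :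
    F.halvApply u ext = F.promote (halvingSet u ext) := by
  cases ext with
  | false => exact halvApply_false_eq_promote hu
  | true =>
    have hlast : F.par (u.getD (u.length - 1) 0) = F.grandpar (u.getD (u.length - 2) 0) := by
      rw [grandpar, hu.par_getD (j := u.length - 2) (by omega), Option.bind_some,
        show u.length - 2 + 1 = u.length - 1 by omega]
    calc F.halvApply u true
        = (F.halvApply u false).setPar (u.getD (u.length - 2) 0)
            (F.par (u.getD (u.length - 1) 0)) := rfl
      _ = F.promote (halvingSet u true) := by
        rw [halvApply_false_eq_promote hu, hlast, setPar_promote, halvingSet_true hlen]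

theorem isContraction_halvApply (hu : F.IsUpPath u) (hlen : 2 ≤ u.length) (ext : Bool) :
    (F.halvApply u ext).IsContraction F :=
  halvApply_eq_promote hu hlen ext ▸ F.isContraction_promote _

theorem Valid.halvApply (hF : F.Valid) (hu : F.IsUpPath u) (hlen : 2 ≤ u.length) (ext : Bool) :
    (F.halvApply u ext).Valid :=
  halvApply_eq_promote hu hlen ext ▸ hF.promote _

theorem verts_halvApply (hu : F.IsUpPath u) (hlen : 2 ≤ u.length) (ext : Bool) :
    (F.halvApply u ext).verts = F.verts :=
  halvApply_eq_promote hu hlen ext ▸ rfl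

theorem par_halvApply_getD (hu : F.IsUpPath u) (ext : Bool) {j : ℕ} (hj : j % 2 = 0)
    (hju : j + 2 < u.length) :
    (F.halvApply u ext).par (u.getD j 0) = some (u.getD (j + 2) 0) := by
  rw [halvApply_eq_promote hu (by omega), par_promote_of_mem (getD_mem_halvingSet ext hj hju),
    hu.grandpar_getD hju]

theorem depth_halvApply_getD_le_two (hu : F.IsUpPath u) (ext : Bool)
    (hroot : F.par (u.getD (u.length - 1) 0) = none) {j : ℕ} (hj : j % 2 = 0)
    (hju : j + 4 = u.length ∨ j + 5 = u.length) :
    (F.halvApply u ext).depth (u.getD j 0) ≤ 2 := by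
  have hG : (F.halvApply u ext).IsContraction F := isContraction_halvApply hu (by omega) ext
  have hnext : (F.halvApply u ext).depth (u.getD (j + 2) 0) ≤ 1 := by
    rcases hju with h | h
    · rw [show u.length - 1 = j + 2 + 1 by omega] at hroot
      calc (F.halvApply u ext).depth (u.getD (j + 2) 0)
          ≤ F.depth (u.getD (j + 2) 0) := hG.depth_le _
        _ ≤ F.depth (u.getD (j + 2 + 1) 0) + 1 :=
          depth_le_of_par_eq_some (hu.par_getD (by omega))
        _ = 1 := by rw [depth_of_par_eq_none hroot]
    · rw [show u.length - 1 = j + 2 + 2 by omega] at hroot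
      calc (F.halvApply u ext).depth (u.getD (j + 2) 0)
          ≤ (F.halvApply u ext).depth (u.getD (j + 2 + 2) 0) + 1 :=
            depth_le_of_par_eq_some (par_halvApply_getD hu ext (by omega) (by omega))
        _ = 1 := by rw [depth_of_par_eq_none (hG.par_eq_none hroot)]
  exact (depth_le_of_par_eq_some (par_halvApply_getD hu ext hj (by omega))).trans
    (Nat.succ_le_succ hnext)

theorem deepVerts_halvApply_ssubset (hF : F.Valid) (hu : F.IsUpPath u) (hlen : 4 ≤ u.length)
    (ext : Bool) (hroot : F.par (u.getD (u.length - 1) 0) = none) :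
    (F.halvApply u ext).deepVerts ⊂ F.deepVerts := by
  obtain ⟨j, hj, hju⟩ : ∃ j, j % 2 = 0 ∧ (j + 4 = u.length ∨ j + 5 = u.length) :=
    ⟨(u.length - 4) / 2 * 2, by omega, by omega⟩
  have hdeep : 3 ≤ F.depth (u.getD j 0) := hu.le_depth_getD hF (by omega)
  have hshallow := depth_halvApply_getD_le_two hu ext hroot hj hju
  have hmem : u.getD j 0 ∈ F.verts := (hF.mem_verts_of_par (hu.par_getD (by omega))).1
  exact (isContraction_halvApply hu (by omega) ext).deepVerts_subset.ssubset_of_mem_notMem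
    (mem_deepVerts.2 ⟨hmem, hdeep⟩) fun h => (mem_deepVerts.1 h).2.not_ge hshallow

theorem card_depth_le_two_lt_halvApply (hF : F.Valid) (hu : F.IsUpPath u) (hlen : 4 ≤ u.length)
    (ext : Bool) (hroot : F.par (u.getD (u.length - 1) 0) = none) :
    (F.verts.filter fun v => F.depth v ≤ 2).card <
      ((F.halvApply u ext).verts.filter fun v => (F.halvApply u ext).depth v ≤ 2).card := by
  have hdeep := Finset.card_lt_card (deepVerts_halvApply_ssubset hF hu hlen ext hroot)
  have hF_card := F.card_depth_le_two_add_card_deepVerts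
  have hG_card := (F.halvApply u ext).card_depth_le_two_add_card_deepVerts
  rw [verts_halvApply hu (by omega)] at hG_card ⊢
  omega

end Halving

end PForest

theorem Reach.add_card_deepVerts_le {F G : PForest} {c : ℕ} (h : Reach F c G) (hF : F.Valid) :
    c + G.deepVerts.card ≤ F.deepVerts.card := by
  induction h with
  | refl F => simp
  | comp F G u ext c hu hlen _ _ ih =>
    have ih := ih (hF.halvApply hu hlen ext)
    split_ifs with hc
    · have := Finset.card_lt_card (deepVerts_halvApply_ssubset hF hu hc.1 ext hc.2)
      omega
    · exact ih.trans (Finset.card_le_card (isContraction_halvApply hu hlen ext).deepVerts_subset)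
  | del F G v c _ hleaf _ ih =>
    exact (ih (hF.deleteVertex hleaf)).trans
      (Finset.card_le_card (F.isContraction_deleteVertex v).deepVerts_subset)

/-- (a) no halving path compression increases the depth of any surviving
vertex; (b) every halving compression along a path of at least 4 vertices terminating at a
root strictly increases the number of vertices of depth at most 2; (c) consequently, over
any interleaved sequence of halving compressions and leaf deletions starting from a forest
with `N` vertices, the number of halving compressions along paths of at least 4 vertices
terminating at a root is at most `N`. -/
theorem halving_compressions_bound :
    (∀ (F : PForest) (u : List ℕ) (ext : Bool), F.Valid → F.IsUpPath u →
        2 ≤ u.length → (ext = true → u.length % 2 = 0) →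
        ∀ v ∈ F.verts, (F.halvApply u ext).depth v ≤ F.depth v) ∧
    (∀ (F : PForest) (u : List ℕ) (ext : Bool), F.Valid → F.IsUpPath u →
        4 ≤ u.length → (ext = true → u.length % 2 = 0) →
        F.par (u.getD (u.length - 1) 0) = none →
        (F.verts.filter fun v => F.depth v ≤ 2).card <
          ((F.halvApply u ext).verts.filter fun v =>
            (F.halvApply u ext).depth v ≤ 2).card) ∧
    (∀ (F : PForest) (c : ℕ) (G : PForest), F.Valid → Reach F c G →
        c ≤ F.verts.card) := by
  refine ⟨fun F u ext _ hu hlen _ v _ => (isContraction_halvApply hu hlen ext).depth_le v,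
    fun F u ext hF hu hlen _ hroot => card_depth_le_two_lt_halvApply hF hu hlen ext hroot,
    fun F c G hF h => ?_⟩
  calc c ≤ c + G.deepVerts.card := Nat.le_add_right _ _
    _ ≤ F.deepVerts.card := h.add_card_deepVerts_le hF
    _ ≤ F.verts.card := Finset.card_filter_le _ _
end

section
/- Let n₀ ≥ 1 and let f, g : ℕ → ℕ be nondecreasing functions with g(n) < n for all n > n₀, and suppose f(f(n)) ≤ g(n) for all n > n₀. Then for every n, min{i : f^{(i)}(n) ≤ n₀} ≤ 2 · min{i : g^{(i)}(n) ≤ n₀}, where f^{(i)} denotes i-fold composition (both minima being well defined since g decreases above n₀). -/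
section IterateCount

variable {α : Type*} [LinearOrder α] {a : α} {f g : α → α}

theorem exists_iterate_le_of_lt_self [WellFoundedLT α] (hg : ∀ x, a < x → g x < x) (x : α) :
    ∃ i, g^[i] x ≤ a := by
  induction x using WellFoundedLT.induction with
  | ind x ih =>
    rcases le_or_gt x a with hxa | hax
    · exact ⟨0, hxa⟩
    · obtain ⟨i, hi⟩ := ih (g x) (hg x hax)
      exact ⟨i + 1, hi⟩

/- As long as `x` stays above `a`, the comparison `x ≤ y` survives `m` steps of `f` on the left
against one step of `g` on the right. -/
theorem exists_le_mul_iterate_le {m k : ℕ} {x y : α} (hg : MonotoneOn g (Set.Ioi a))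
    (hfg : ∀ z, a < z → f^[m] z ≤ g z) (hxy : x ≤ y) (hk : g^[k] y ≤ a) :
    ∃ j ≤ m * k, f^[j] x ≤ a := by
  induction k generalizing x y with
  | zero => exact ⟨0, Nat.zero_le _, hxy.trans hk⟩
  | succ k ih =>
    rcases le_or_gt x a with hxa | hax
    · exact ⟨0, Nat.zero_le _, hxa⟩
    · have hstep : f^[m] x ≤ g y := (hfg x hax).trans (hg hax (hax.trans_le hxy) hxy)
      obtain ⟨j, hjk, hj⟩ := ih hstep hk
      refine ⟨j + m, Nat.add_le_add_right hjk m, ?_⟩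
      rwa [Function.iterate_add_apply]

theorem iterate_count_le_twice_general [WellFoundedLT α] {m : ℕ}
    (hg : MonotoneOn g (Set.Ioi a)) (hgdec : ∀ x, a < x → g x < x)
    (hfg : ∀ x, a < x → f^[m] x ≤ g x) (x : α) :
    sInf {i | f^[i] x ≤ a} ≤ m * sInf {i | g^[i] x ≤ a} := by
  have hmin : g^[sInf {i | g^[i] x ≤ a}] x ≤ a :=
    Nat.sInf_mem (exists_iterate_le_of_lt_self hgdec x)
  obtain ⟨j, hjm, hj⟩ := exists_le_mul_iterate_le hg hfg le_rfl hmin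
  exact (Nat.sInf_le hj).trans hjm

end IterateCount

/-- If `f` and `g` are nondecreasing, `g n < n` above `n₀ ≥ 1`, and
`f (f n) ≤ g n` above `n₀`, then the number of iterations of `f` needed to drop to `n₀`
is at most twice the number of iterations of `g` needed to drop to `n₀`. -/
theorem iterate_count_le_twice (n₀ : ℕ) (hn₀ : 1 ≤ n₀) (f g : ℕ → ℕ)
    (hf : Monotone f) (hg : Monotone g)
    (hgdec : ∀ n, n₀ < n → g n < n)
    (hfg : ∀ n, n₀ < n → f (f n) ≤ g n) (n : ℕ) :
    sInf {i | f^[i] n ≤ n₀} ≤ 2 * sInf {i | g^[i] n ≤ n₀} :=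
  iterate_count_le_twice_general (m := 2) (hg.monotoneOn _) hgdec hfg n
end
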